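/- For every integer m ≥ 1 there is a constant c > 0, depending only on f, D and m, such that for every ν ∈ (0,1], the time average over [T₁,T₂] satisfies { ‖u(t)‖_m² } ≥ c ν^{−(2m−1)}. -/

import Mathlib

open MeasureTheory Set
open scoped ENNReal

/-- The `L^p` norm (on the circle, i.e. over one period `(0,1]`) of the `m`-th
derivative of a function `v : ℝ → ℝ` (identified with a function on `S¹ = ℝ/ℤ`). -/
noncomputable def sobLp (m : ℕ) (p : ℝ≥0∞) (v : ℝ → ℝ) : ℝ :=
  (eLpNorm (iteratedDeriv m v) p (volume.restrict (Ioc (0:ℝ) 1))).toReal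

/-- `u` is a smooth, space-periodic, zero-mean-value solution of the generalised
Burgers equation `u_t + f'(u) u_x - ν u_xx = 0` with strongly convex `f` and
nonzero initial condition. -/
structure IsBurgersSolution (f : ℝ → ℝ) (σ ν : ℝ) (u : ℝ → ℝ → ℝ) : Prop where
  hf : ContDiff ℝ (⊤ : ℕ∞) f
  hσ : 0 < σ
  hconv : ∀ y, σ ≤ iteratedDeriv 2 f y
  hν : 0 < ν
  hu : ContDiffOn ℝ (⊤ : ℕ∞) (Function.uncurry u) (Ici (0:ℝ) ×ˢ univ)
  hper : ∀ t x, u t (x + 1) = u t x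
  hpde : ∀ t, 0 < t → ∀ x,
    deriv (fun s => u s x) t + deriv f (u t x) * deriv (u t) x
      - ν * deriv (deriv (u t)) x = 0
  hmean : ∀ t, 0 ≤ t → ∫ x in Ioc (0:ℝ) 1, u t x = 0
  hinit : ∃ x, u 0 x ≠ 0

/-- The quantity `D = max(|u₀|₁⁻¹, |u₀|_{1,∞})`. -/
noncomputable def burgersD (u : ℝ → ℝ → ℝ) : ℝ :=
  max (sobLp 0 1 (u 0))⁻¹ (sobLp 1 ⊤ (u 0))

/-- `T₁ = D⁻² C̃⁻¹ / 4`. -/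
noncomputable def burgersT₁ (D Ct : ℝ) : ℝ := (D ^ 2)⁻¹ * Ct⁻¹ / 4

/-- `T₂ = max(3T₁/2, 2Dσ⁻¹)`. -/
noncomputable def burgersT₂ (σ D Ct : ℝ) : ℝ :=
  max (3 / 2 * burgersT₁ D Ct) (2 * D * σ⁻¹)

/-- Time average over `[T₁, T₂]`. -/
noncomputable def timeAvg (T₁ T₂ : ℝ) (A : ℝ → ℝ) : ℝ :=
  (T₂ - T₁)⁻¹ * ∫ t in T₁..T₂, A t

/-- The structure function `S_p(ℓ)`. -/
noncomputable def structFun (T₁ T₂ : ℝ) (u : ℝ → ℝ → ℝ) (p ℓ : ℝ) : ℝ :=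
  timeAvg T₁ T₂ (fun t => ∫ x in Ioc (0:ℝ) 1, |u t (x + ℓ) - u t x| ^ p)


theorem sobLp_two_sq (m : ℕ) (v : ℝ → ℝ) (hv : Continuous (iteratedDeriv m v)) :
    sobLp m 2 v ^ 2 = ∫ x in (0:ℝ)..1, (iteratedDeriv m v x) ^ 2 := by
  have hmem : MemLp (iteratedDeriv m v) 2 (volume.restrict (Ioc (0:ℝ) 1)) := by
    rw [memLp_two_iff_integrable_sq hv.aestronglyMeasurable]
    have := ((hv.pow 2).intervalIntegrable (μ := volume) 0 1)
    exact (intervalIntegrable_iff_integrableOn_Ioc_of_le zero_le_one).1 this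
  have h0 : 0 ≤ ∫ x in Ioc (0:ℝ) 1, (iteratedDeriv m v x) ^ 2 :=
    integral_nonneg fun x => sq_nonneg _
  unfold sobLp
  rw [hmem.eLpNorm_eq_integral_rpow_norm (by norm_num) (by norm_num),
    intervalIntegral.integral_of_le zero_le_one]
  have e : ∀ x, ‖iteratedDeriv m v x‖ ^ (ENNReal.toReal 2) = (iteratedDeriv m v x) ^ 2 := by
    intro x; simp
  simp_rw [e]
  rw [ENNReal.toReal_ofReal (by positivity), ← Real.rpow_natCast, ← Real.rpow_mul h0]
  norm_num

theorem sobLp_zero_one (v : ℝ → ℝ) (hv : Continuous v) :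
    sobLp 0 1 v = ∫ x in (0:ℝ)..1, |v x| := by
  have hmem : MemLp v 1 (volume.restrict (Ioc (0:ℝ) 1)) := by
    rw [memLp_one_iff_integrable]
    exact (intervalIntegrable_iff_integrableOn_Ioc_of_le zero_le_one).1
      (hv.intervalIntegrable (μ := volume) 0 1)
  have h0 : 0 ≤ ∫ x in Ioc (0:ℝ) 1, |v x| :=
    integral_nonneg fun x => abs_nonneg _
  unfold sobLp
  rw [iteratedDeriv_zero, hmem.eLpNorm_eq_integral_rpow_norm (by norm_num) (by norm_num),
    intervalIntegral.integral_of_le zero_le_one]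
  simp [h0]

theorem cs_int (g h : ℝ → ℝ) (hg : Continuous g) (hh : Continuous h) :
    (∫ x in (0:ℝ)..1, g x * h x) ^ 2 ≤
      (∫ x in (0:ℝ)..1, g x ^ 2) * ∫ x in (0:ℝ)..1, h x ^ 2 := by
  have := discrim_le_zero (a := ∫ x in (0:ℝ)..1, g x ^ 2) (b := 2 * ∫ x in (0:ℝ)..1, g x * h x)
    (c := ∫ x in (0:ℝ)..1, h x ^ 2) (fun y => by
      have e : (∫ x in (0:ℝ)..1, (y * g x + h x) ^ 2) =
          (∫ x in (0:ℝ)..1, g x ^ 2) * (y * y) + (2 * ∫ x in (0:ℝ)..1, g x * h x) * y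
            + ∫ x in (0:ℝ)..1, h x ^ 2 := by
        have e1 : ∀ x, (y * g x + h x) ^ 2 = (y * y) * g x ^ 2 + (2 * y) * (g x * h x) + h x ^ 2 :=
          fun x => by ring
        simp_rw [e1]
        rw [intervalIntegral.integral_add, intervalIntegral.integral_add,
          intervalIntegral.integral_const_mul, intervalIntegral.integral_const_mul]
        · ring
        all_goals
          apply Continuous.intervalIntegrable
          fun_prop
      rw [← e]
      exact intervalIntegral.integral_nonneg zero_le_one fun x _ => sq_nonneg _)
  unfold discrim at this
  nlinarith

/-- `A_j ^ 2 ≤ A_{j-1} A_{j+1}` for periodic functions. -/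
theorem logconv (g : ℝ → ℝ) (hg : ContDiff ℝ (⊤ : ℕ∞) g) (hp : ∀ x, g (x + 1) = g x) :
    (∫ x in (0:ℝ)..1, deriv g x ^ 2) ^ 2 ≤
      (∫ x in (0:ℝ)..1, g x ^ 2) * ∫ x in (0:ℝ)..1, deriv (deriv g) x ^ 2 := by
  have hg1 : ContDiff ℝ (⊤ : ℕ∞) (deriv g) := (contDiff_infty_iff_deriv.1 hg).2
  have hg2 : ContDiff ℝ (⊤ : ℕ∞) (deriv (deriv g)) := (contDiff_infty_iff_deriv.1 hg1).2
  have hp1 : ∀ x, deriv g (x + 1) = deriv g x := by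
    intro x
    rw [← deriv_comp_add_const]
    congr 1; funext y; exact hp y
  have d0 : Differentiable ℝ g := (contDiff_infty_iff_deriv.1 hg).1
  have d1 : Differentiable ℝ (deriv g) := (contDiff_infty_iff_deriv.1 hg1).1
  have ibp := intervalIntegral.integral_mul_deriv_eq_deriv_mul (a := 0) (b := 1)
    (u := deriv g) (v := g) (u' := deriv (deriv g)) (v' := deriv g)
    (fun x _ => (d1 x).hasDerivAt) (fun x _ => (d0 x).hasDerivAt)
    (hg2.continuous.intervalIntegrable _ _) (hg1.continuous.intervalIntegrable _ _)
  have e0 : g 1 = g 0 := by simpa using hp 0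
  have e1 : deriv g 1 = deriv g 0 := by simpa using hp1 0
  rw [e0, e1, sub_self, zero_sub] at ibp
  have e2 : (∫ x in (0:ℝ)..1, deriv g x ^ 2) = -∫ x in (0:ℝ)..1, g x * deriv (deriv g) x := by
    rw [show (∫ x in (0:ℝ)..1, g x * deriv (deriv g) x) =
      ∫ x in (0:ℝ)..1, deriv (deriv g) x * g x from by simp_rw [mul_comm], ← ibp]
    simp_rw [sq]
  rw [e2, neg_sq]
  exact cs_int _ _ hg.continuous hg2.continuous

/-- Base Gagliardo-Nirenberg step for the derivative of a periodic function. -/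
theorem gn_base (φ : ℝ → ℝ) (hg : ContDiff ℝ (⊤ : ℕ∞) φ) (hp : ∀ x, φ (x + 1) = φ x)
    (B : ℝ) (hB0 : 0 ≤ B) (hB : ∀ x, deriv φ x ≤ B) :
    (∫ x in (0:ℝ)..1, deriv φ x ^ 2) ^ 3 ≤
      4 * (2 * B) ^ 4 * ∫ x in (0:ℝ)..1, deriv (deriv φ) x ^ 2 := by
  have hg1 : ContDiff ℝ (⊤ : ℕ∞) (deriv φ) := (contDiff_infty_iff_deriv.1 hg).2
  have hg2 : ContDiff ℝ (⊤ : ℕ∞) (deriv (deriv φ)) := (contDiff_infty_iff_deriv.1 hg1).2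
  have d0 : Differentiable ℝ φ := (contDiff_infty_iff_deriv.1 hg).1
  have d1 : Differentiable ℝ (deriv φ) := (contDiff_infty_iff_deriv.1 hg1).1
  set w := deriv φ with hw
  have e0 : φ 1 = φ 0 := by simpa using hp 0
  obtain ⟨z, hz, hwz⟩ := exists_deriv_eq_zero (f := φ) zero_lt_one hg.continuous.continuousOn
    e0.symm
  rw [← hw] at hwz
  have c1 := hg1.continuous
  have c2 := hg2.continuous
  have hint : ∫ x in (0:ℝ)..1, w x = 0 := by
    rw [intervalIntegral.integral_eq_sub_of_hasDerivAt (f := φ) (fun x _ => (d0 x).hasDerivAt)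
      (c1.intervalIntegrable _ _), e0, sub_self]
  have hL1 : ∫ x in (0:ℝ)..1, |w x| ≤ 2 * B := by
    calc ∫ x in (0:ℝ)..1, |w x| ≤ ∫ x in (0:ℝ)..1, (2 * B - w x) := by
          apply intervalIntegral.integral_mono_on zero_le_one
          · exact c1.abs.intervalIntegrable _ _
          · exact (continuous_const.sub c1).intervalIntegrable _ _
          · intro x _
            have := hB x
            rw [abs_le]; constructor <;> linarith
      _ = 2 * B := by
          rw [intervalIntegral.integral_sub (by simp) (c1.intervalIntegrable _ _), hint]
          simp
  have hL0 : 0 ≤ ∫ x in (0:ℝ)..1, |w x| :=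
    intervalIntegral.integral_nonneg zero_le_one fun x _ => abs_nonneg _
  set A := ∫ x in (0:ℝ)..1, w x ^ 2 with hA
  set A' := ∫ x in (0:ℝ)..1, deriv w x ^ 2 with hA'
  set P := ∫ x in (0:ℝ)..1, |w x| * |deriv w x| with hP
  have hA0 : 0 ≤ A := intervalIntegral.integral_nonneg zero_le_one fun x _ => sq_nonneg _
  have hA0' : 0 ≤ A' := intervalIntegral.integral_nonneg zero_le_one fun x _ => sq_nonneg _
  have hP0 : 0 ≤ P := intervalIntegral.integral_nonneg zero_le_one fun x _ => by positivity
  have hPA : P ^ 2 ≤ A * A' := by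
    have := cs_int (fun x => |w x|) (fun x => |deriv w x|) c1.abs c2.abs
    simpa only [sq_abs] using this
  have hsup : ∀ x ∈ Icc (0:ℝ) 1, w x ^ 2 ≤ 2 * P := by
    intro x hx
    have h1 : ∫ y in z..x, 2 * (w y * deriv w y) = w x ^ 2 - w z ^ 2 := by
      apply intervalIntegral.integral_eq_sub_of_hasDerivAt
      · intro y _
        have := ((d1 y).hasDerivAt).pow 2
        have e : 2 * (w y * deriv w y) = ((2:ℕ):ℝ) * w y ^ (2 - 1) * deriv w y := by
          norm_num; ring
        rw [e]; exact this
      · exact (by fun_prop : Continuous fun y => 2 * (w y * deriv w y)).intervalIntegrable _ _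
    have h2 : |∫ y in z..x, 2 * (w y * deriv w y)| ≤ ∫ y in uIoc z x, 2 * (|w y| * |deriv w y|) := by
      have := intervalIntegral.norm_integral_le_integral_norm_uIoc
        (f := fun y => 2 * (w y * deriv w y)) (a := z) (b := x) (μ := volume)
      simpa [Real.norm_eq_abs, abs_mul] using this
    have h3 : ∫ y in uIoc z x, 2 * (|w y| * |deriv w y|) ≤
        ∫ y in Ioc (0:ℝ) 1, 2 * (|w y| * |deriv w y|) := by
      apply setIntegral_mono_set
      · exact (intervalIntegrable_iff_integrableOn_Ioc_of_le zero_le_one).1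
          ((by fun_prop : Continuous fun y => 2 * (|w y| * |deriv w y|)).intervalIntegrable _ _)
      · exact Filter.Eventually.of_forall fun y => by positivity
      · apply Filter.Eventually.of_forall
        apply Ioc_subset_Ioc
        · exact le_min hz.1.le hx.1
        · exact max_le hz.2.le hx.2
    rw [← intervalIntegral.integral_of_le zero_le_one, intervalIntegral.integral_const_mul] at h3
    have h4 := le_abs_self (∫ y in z..x, 2 * (w y * deriv w y))
    rw [h1, hwz] at h4
    rw [h1, hwz] at h2
    have : (0:ℝ)^2 = 0 := by norm_num
    linarith
  have hAM : A ≤ Real.sqrt (2 * P) * (2 * B) := by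
    calc A ≤ ∫ x in (0:ℝ)..1, Real.sqrt (2 * P) * |w x| := by
          apply intervalIntegral.integral_mono_on zero_le_one
          · exact (c1.pow 2).intervalIntegrable _ _
          · exact (continuous_const.mul c1.abs).intervalIntegrable _ _
          · intro x hx
            have := Real.le_sqrt_of_sq_le (x := |w x|) (y := 2 * P) (by rw [sq_abs]; exact hsup x hx)
            rw [← sq_abs, sq]
            exact mul_le_mul_of_nonneg_right this (abs_nonneg _)
      _ = Real.sqrt (2 * P) * ∫ x in (0:ℝ)..1, |w x| := by
          rw [intervalIntegral.integral_const_mul]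
      _ ≤ _ := mul_le_mul_of_nonneg_left hL1 (Real.sqrt_nonneg _)
  have hA2 : A ^ 2 ≤ 2 * P * (2 * B) ^ 2 := by
    calc A ^ 2 ≤ (Real.sqrt (2 * P) * (2 * B)) ^ 2 := by gcongr
      _ = _ := by rw [mul_pow, Real.sq_sqrt (by positivity)]
  have hA4 : A ^ 4 ≤ 4 * (2 * B) ^ 4 * (A * A') := by
    calc A ^ 4 = (A ^ 2) ^ 2 := by ring
      _ ≤ (2 * P * (2 * B) ^ 2) ^ 2 := by gcongr
      _ = 4 * (2 * B) ^ 4 * P ^ 2 := by ring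
      _ ≤ _ := by gcongr
  rcases hA0.eq_or_lt with h | h
  · rw [← h, zero_pow (by norm_num)]; positivity
  · have : A * A ^ 3 ≤ A * (4 * (2 * B) ^ 4 * A') := by linarith [show A * A^3 = A^4 by ring]
    exact le_of_mul_le_mul_left this h

theorem gn_seq (A : ℕ → ℝ) (K : ℝ) (hK : 0 ≤ K) (h0 : ∀ j, 0 ≤ A j)
    (hlog : ∀ j, A (j + 1) ^ 2 ≤ A j * A (j + 2))
    (hb : A 1 ^ 3 ≤ K * A 2) (k : ℕ) : A 1 ^ (2 * k + 1) ≤ K ^ k * A (k + 1) := by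
  have hR : ∀ j, A 1 ^ 2 * A (j + 1) ≤ K * A (j + 2) := by
    intro j
    induction j with
    | zero => linarith [show A 1 ^ 2 * A (0 + 1) = A 1 ^ 3 by ring_nf]
    | succ j ih =>
      have hl := hlog (j + 1)
      rcases (h0 (j + 1)).eq_or_lt with h | h
      · rw [← h, zero_mul] at hl
        have : A (j + 1 + 1) = 0 := by nlinarith [h0 (j+1+1)]
        rw [this, mul_zero]
        exact mul_nonneg hK (h0 _)
      · apply le_of_mul_le_mul_left _ h
        have h2 := mul_le_mul_of_nonneg_right ih (h0 (j + 2))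
        have h3 := mul_le_mul_of_nonneg_left hl hK
        have e : j + 1 + 1 = j + 2 := rfl
        rw [e] at *
        nlinarith
  induction k with
  | zero => simp
  | succ k ih =>
    calc A 1 ^ (2 * (k + 1) + 1) = A 1 ^ 2 * A 1 ^ (2 * k + 1) := by ring
      _ ≤ A 1 ^ 2 * (K ^ k * A (k + 1)) := by gcongr
      _ = K ^ k * (A 1 ^ 2 * A (k + 1)) := by ring
      _ ≤ K ^ k * (K * A (k + 2)) := by
        apply mul_le_mul_of_nonneg_left (hR k) (by positivity)
      _ = _ := by ring

theorem iterDeriv_smooth (φ : ℝ → ℝ) (hg : ContDiff ℝ (⊤ : ℕ∞) φ) (j : ℕ) :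
    ContDiff ℝ (⊤ : ℕ∞) (iteratedDeriv j φ) := by
  induction j with
  | zero => simpa using hg
  | succ j ih => rw [iteratedDeriv_succ]; exact (contDiff_infty_iff_deriv.1 ih).2

theorem iterDeriv_per (φ : ℝ → ℝ) (hp : ∀ x, φ (x + 1) = φ x) (j : ℕ) :
    ∀ x, iteratedDeriv j φ (x + 1) = iteratedDeriv j φ x := by
  induction j with
  | zero => simpa using hp
  | succ j ih =>
    intro x
    rw [iteratedDeriv_succ, ← deriv_comp_add_const]
    congr 1; funext y; exact ih y

theorem gn_full (φ : ℝ → ℝ) (hg : ContDiff ℝ (⊤ : ℕ∞) φ) (hp : ∀ x, φ (x + 1) = φ x)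
    (B : ℝ) (hB0 : 0 ≤ B) (hB : ∀ x, deriv φ x ≤ B) (k : ℕ) :
    (sobLp 1 2 φ ^ 2) ^ (2 * k + 1) ≤ (4 * (2 * B) ^ 4) ^ k * sobLp (k + 1) 2 φ ^ 2 := by
  apply gn_seq (fun j => sobLp j 2 φ ^ 2) _ (by positivity) (fun j => sq_nonneg _)
  · intro j
    simp only [sobLp_two_sq _ _ (iterDeriv_smooth φ hg _).continuous]
    have := logconv _ (iterDeriv_smooth φ hg j) (iterDeriv_per φ hp j)
    simpa only [← iteratedDeriv_succ] using this
  · simp only [sobLp_two_sq _ _ (iterDeriv_smooth φ hg _).continuous]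
    have := gn_base φ hg hp B hB0 hB
    simpa only [iteratedDeriv_succ, iteratedDeriv_zero, iteratedDeriv_one] using this

def Om : Set (ℝ × ℝ) := Ioi (0:ℝ) ×ˢ univ

theorem Om_open : IsOpen Om := isOpen_Ioi.prod isOpen_univ

theorem mem_Om {t x : ℝ} (ht : 0 < t) : (t, x) ∈ Om := ⟨ht, mem_univ _⟩

def SmoothOm (G : ℝ → ℝ → ℝ) : Prop := ContDiffOn ℝ (⊤ : ℕ∞) (Function.uncurry G) Om

theorem SmoothOm.diffAt {G : ℝ → ℝ → ℝ} (h : SmoothOm G) {t : ℝ} (ht : 0 < t) (x : ℝ) :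
    DifferentiableAt ℝ (Function.uncurry G) (t, x) :=
  (h.contDiffAt (Om_open.mem_nhds (mem_Om ht))).differentiableAt (by simp)

theorem SmoothOm.hasDerivAt_x {G : ℝ → ℝ → ℝ} (h : SmoothOm G) {t : ℝ} (ht : 0 < t) (x : ℝ) :
    HasDerivAt (G t) (fderiv ℝ (Function.uncurry G) (t, x) (0, 1)) x := by
  have h1 := (h.diffAt ht x).hasFDerivAt
  have h2 : HasDerivAt (fun y : ℝ => (t, y)) ((0:ℝ), (1:ℝ)) x :=
    (hasDerivAt_const x t).prodMk (hasDerivAt_id x)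
  exact h1.comp_hasDerivAt x h2

theorem SmoothOm.hasDerivAt_t {G : ℝ → ℝ → ℝ} (h : SmoothOm G) {t : ℝ} (ht : 0 < t) (x : ℝ) :
    HasDerivAt (fun s => G s x) (fderiv ℝ (Function.uncurry G) (t, x) (1, 0)) t := by
  have h1 := (h.diffAt ht x).hasFDerivAt
  have h2 : HasDerivAt (fun y : ℝ => (y, x)) ((1:ℝ), (0:ℝ)) t :=
    (hasDerivAt_id t).prodMk (hasDerivAt_const t x)
  exact h1.comp_hasDerivAt t h2

theorem SmoothOm.fderiv_apply {G : ℝ → ℝ → ℝ} (h : SmoothOm G) (e : ℝ × ℝ) :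
    ContDiffOn ℝ (⊤ : ℕ∞) (fun p => fderiv ℝ (Function.uncurry G) p e) Om := by
  have := ContDiffOn.fderiv_of_isOpen (m := (⊤ : ℕ∞)) h Om_open (by simp)
  exact this.clm_apply contDiffOn_const

theorem SmoothOm.dx {G : ℝ → ℝ → ℝ} (h : SmoothOm G) : SmoothOm (fun t x => deriv (G t) x) := by
  apply (h.fderiv_apply (0, 1)).congr
  rintro ⟨t, x⟩ ⟨ht, -⟩
  exact (h.hasDerivAt_x ht x).deriv

theorem SmoothOm.dt {G : ℝ → ℝ → ℝ} (h : SmoothOm G) :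
    SmoothOm (fun t x => deriv (fun s => G s x) t) := by
  apply (h.fderiv_apply (1, 0)).congr
  rintro ⟨t, x⟩ ⟨ht, -⟩
  exact (h.hasDerivAt_t ht x).deriv

theorem SmoothOm.mixed {G : ℝ → ℝ → ℝ} (h : SmoothOm G) {t : ℝ} (ht : 0 < t) (x : ℝ) :
    deriv (fun s => deriv (G s) x) t = deriv (fun y => deriv (fun s => G s y) t) x := by
  have hsym := (h.contDiffAt (Om_open.mem_nhds (mem_Om (x := x) ht))).isSymmSndFDerivAt
    (by simp only [minSmoothness_of_isRCLikeNormedField]; exact WithTop.coe_le_coe.2 (le_top : (2:ℕ∞) ≤ ⊤))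
  have hd : DifferentiableAt ℝ (fderiv ℝ (Function.uncurry G)) (t, x) :=
    ((ContDiffOn.fderiv_of_isOpen (m := (⊤ : ℕ∞)) h Om_open (by simp)).contDiffAt
      (Om_open.mem_nhds (mem_Om ht))).differentiableAt (by simp)
  have h1 : HasDerivAt (fun y : ℝ => (t, y)) ((0:ℝ), (1:ℝ)) x :=
    (hasDerivAt_const x t).prodMk (hasDerivAt_id x)
  have h2 : HasDerivAt (fun y : ℝ => (y, x)) ((1:ℝ), (0:ℝ)) t :=
    (hasDerivAt_id t).prodMk (hasDerivAt_const t x)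
  set H := fderiv ℝ (Function.uncurry G) with hH
  have a1 : HasDerivAt (fun y => H (t, y) (1, 0)) (fderiv ℝ H (t, x) (0, 1) (1, 0)) x :=
    (ContinuousLinearMap.apply ℝ ℝ ((1:ℝ), (0:ℝ))).hasFDerivAt.comp_hasDerivAt x
      (hd.hasFDerivAt.comp_hasDerivAt x h1)
  have a2 : HasDerivAt (fun s => H (s, x) (0, 1)) (fderiv ℝ H (t, x) (1, 0) (0, 1)) t :=
    (ContinuousLinearMap.apply ℝ ℝ ((0:ℝ), (1:ℝ))).hasFDerivAt.comp_hasDerivAt t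
      (hd.hasFDerivAt.comp_hasDerivAt t h2)
  have e1 : (fun y => deriv (fun s => G s y) t) =
      fun y => fderiv ℝ (Function.uncurry G) (t, y) (1, 0) := by
    funext y; exact (h.hasDerivAt_t ht y).deriv
  have e2 : (fun s => deriv (G s) x) =ᶠ[nhds t]
      fun s => fderiv ℝ (Function.uncurry G) (s, x) (0, 1) := by
    filter_upwards [Ioi_mem_nhds ht] with s hs
    exact (h.hasDerivAt_x hs x).deriv
  rw [e1, e2.deriv_eq, a1.deriv, a2.deriv]
  exact hsym.eq _ _

theorem SmoothOm.slice {G : ℝ → ℝ → ℝ} (h : SmoothOm G) {t : ℝ} (ht : 0 < t) :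
    ContDiff ℝ (⊤ : ℕ∞) (G t) := by
  rw [← contDiffOn_univ]
  exact ContDiffOn.comp h (t := Om) (f := fun y : ℝ => (t, y)) (by fun_prop)
    (fun y _ => mem_Om ht)

theorem SmoothOm.iter {G : ℝ → ℝ → ℝ} (h : SmoothOm G) (j : ℕ) :
    SmoothOm (fun t x => iteratedDeriv j (G t) x) := by
  induction j with
  | zero => simpa using h
  | succ j ih => simpa only [iteratedDeriv_succ] using ih.dx

theorem SmoothOm.contAt_max {G : ℝ → ℝ → ℝ} (h : ContinuousOn (Function.uncurry G) Om)
    {ε : ℝ} (hε : 0 < ε) : Continuous (Function.uncurry fun t x => G (max t ε) x) := by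
  have : Continuous fun p : ℝ × ℝ => (max p.1 ε, p.2) := by fun_prop
  exact h.comp_continuous this fun p => mem_Om (lt_max_of_lt_right hε)

theorem SmoothOm.cont_int {G : ℝ → ℝ → ℝ} (h : ContinuousOn (Function.uncurry G) Om) :
    ContinuousOn (fun t => ∫ x in (0:ℝ)..1, G t x) (Ioi 0) := by
  intro t ht
  have ht : 0 < t := ht
  have h1 := intervalIntegral.continuous_parametric_intervalIntegral_of_continuous' (μ := volume)
    (SmoothOm.contAt_max h (half_pos ht)) 0 1
  apply ContinuousAt.continuousWithinAt
  apply h1.continuousAt.congr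
  filter_upwards [Ioi_mem_nhds (half_lt_self ht)] with s hs
  rw [max_eq_left (le_of_lt hs)]

theorem SmoothOm.deriv_int {G : ℝ → ℝ → ℝ} (h : SmoothOm G) {t : ℝ} (ht : 0 < t) :
    HasDerivAt (fun s => ∫ x in (0:ℝ)..1, G s x) (∫ x in (0:ℝ)..1, deriv (fun s => G s x) t) t := by
  have hc : ContinuousOn (Function.uncurry fun t x => deriv (fun s => G s x) t) Om :=
    h.dt.continuousOn
  have hK : IsCompact (Icc (t/2) (2*t) ×ˢ Icc (0:ℝ) 1) := isCompact_Icc.prod isCompact_Icc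
  have hKs : (Icc (t/2) (2*t) ×ˢ Icc (0:ℝ) 1) ⊆ Om := by
    rintro ⟨s, x⟩ ⟨hs, -⟩
    exact mem_Om (lt_of_lt_of_le (half_pos ht) hs.1)
  obtain ⟨M, hM⟩ := hK.exists_bound_of_continuousOn (hc.mono hKs)
  refine (intervalIntegral.hasDerivAt_integral_of_dominated_loc_of_deriv_le
    (F := G) (F' := fun t x => deriv (fun s => G s x) t) (bound := fun _ => M)
    (s := Ioo (t/2) (2*t)) (Ioo_mem_nhds (by linarith) (by linarith)) ?_ ?_ ?_ ?_ ?_ ?_).2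
  · filter_upwards [Ioi_mem_nhds ht] with s hs
    exact (h.slice hs).continuous.aestronglyMeasurable
  · exact (h.slice ht).continuous.intervalIntegrable _ _
  · exact (h.dt.slice ht).continuous.aestronglyMeasurable
  · apply Filter.Eventually.of_forall
    intro x hx s hs
    rw [uIoc_of_le zero_le_one] at hx
    exact hM (s, x) ⟨Ioo_subset_Icc_self hs, Ioc_subset_Icc_self hx⟩
  · simp
  · apply Filter.Eventually.of_forall
    intro x hx s hs
    have : 0 < s := by linarith [hs.1]
    exact (h.hasDerivAt_t this x).differentiableAt.hasDerivAt

theorem second_deriv_max (g : ℝ → ℝ) (hg : Continuous g) (x : ℝ) (hx : ∀ y, g y ≤ g x) :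
    deriv g x = 0 ∧ deriv (deriv g) x ≤ 0 := by
  have hmax : IsLocalMax g x := Filter.Eventually.of_forall hx
  refine ⟨hmax.deriv_eq_zero, ?_⟩
  by_contra! hpos
  have hmin := isLocalMin_of_deriv_deriv_pos hpos hmax.deriv_eq_zero hg.continuousAt
  have hc : g =ᶠ[nhds x] fun _ => g x := by
    filter_upwards [hmin] with y hy
    exact le_antisymm (hx y) hy
  have := hc.deriv.deriv_eq
  simp at this
  linarith

theorem left_deriv_max (g : ℝ → ℝ) (g' a b : ℝ) (hab : a < b) (hg : HasDerivAt g g' b)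
    (hm : ∀ s ∈ Icc a b, g s ≤ g b) : 0 ≤ g' := by
  have h1 := (hasDerivWithinAt_iff_tendsto_slope' (s := Iio b) (by simp)).1 hg.hasDerivWithinAt
  apply ge_of_tendsto h1
  filter_upwards [Ioo_mem_nhdsLT hab] with s hs
  rw [slope_def_field]
  apply div_nonneg_of_nonpos
  · linarith [hm s (Ioo_subset_Icc_self hs)]
  · linarith [hs.2]

theorem IsBurgersSolution.smooth {f : ℝ → ℝ} {σ ν : ℝ} {u : ℝ → ℝ → ℝ}
    (h : IsBurgersSolution f σ ν u) : SmoothOm u :=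
  h.hu.mono (prod_mono Ioi_subset_Ici_self subset_rfl)

theorem per_deriv (φ : ℝ → ℝ) (hp : ∀ x, φ (x + 1) = φ x) :
    ∀ x, deriv φ (x + 1) = deriv φ x := by
  intro x
  rw [← deriv_comp_add_const]
  congr 1; funext y; exact hp y

theorem IsBurgersSolution.pde_x {f : ℝ → ℝ} {σ ν : ℝ} {u : ℝ → ℝ → ℝ}
    (h : IsBurgersSolution f σ ν u) {t : ℝ} (ht : 0 < t) (x : ℝ) :
    deriv (fun s => deriv (u s) x) t = ν * deriv (deriv (deriv (u t))) x
      - deriv (deriv f) (u t x) * deriv (u t) x ^ 2 - deriv f (u t x) * deriv (deriv (u t)) x := by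
  have hs := h.smooth
  rw [hs.mixed ht x]
  have e : (fun y => deriv (fun s => u s y) t) =
      fun y => ν * deriv (deriv (u t)) y - deriv f (u t y) * deriv (u t) y := by
    funext y; linarith [h.hpde t ht y]
  have d0 := ((contDiff_infty_iff_deriv.1 (hs.slice ht)).1 x).hasDerivAt
  have d1 := ((contDiff_infty_iff_deriv.1 (hs.dx.slice ht)).1 x).hasDerivAt
  have d2 := ((contDiff_infty_iff_deriv.1 (hs.dx.dx.slice ht)).1 x).hasDerivAt
  have df := ((contDiff_infty_iff_deriv.1 (contDiff_infty_iff_deriv.1 h.hf).2).1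
    (u t x)).hasDerivAt
  have := (d2.const_mul ν).sub ((df.comp x d0).mul d1)
  rw [e]
  refine (HasDerivAt.deriv this).trans ?_
  simp only [Function.comp_def]
  ring

theorem IsBurgersSolution.oleinik_aux {f : ℝ → ℝ} {σ ν : ℝ} {u : ℝ → ℝ → ℝ}
    (h : IsBurgersSolution f σ ν u) {ε T : ℝ} (hε : 0 < ε) (hT : ε < T) (x : ℝ) :
    (T - ε) * deriv (u T) x ≤ σ⁻¹ := by
  have hs := h.smooth
  set W : ℝ × ℝ → ℝ := fun p => (p.1 - ε) * deriv (u p.1) p.2 with hW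
  have hK : IsCompact (Icc ε T ×ˢ Icc (0:ℝ) 1) := isCompact_Icc.prod isCompact_Icc
  have hKs : (Icc ε T ×ˢ Icc (0:ℝ) 1) ⊆ Om := by
    rintro ⟨s, x⟩ ⟨hs, -⟩
    exact mem_Om (lt_of_lt_of_le hε hs.1)
  have hWc : ContinuousOn W Om := by
    have h1 : ContinuousOn (fun p : ℝ × ℝ => deriv (u p.1) p.2) Om := hs.dx.continuousOn
    exact (by fun_prop : ContinuousOn (fun p : ℝ × ℝ => p.1 - ε) Om).mul h1
  obtain ⟨⟨t₁, x₁⟩, hmem, hmax⟩ := hK.exists_isMaxOn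
    ⟨(ε, 0), ⟨⟨le_rfl, hT.le⟩, ⟨le_rfl, zero_le_one⟩⟩⟩ (hWc.mono hKs)
  have hper : ∀ t, ∀ x, deriv (u t) (x + 1) = deriv (u t) x := fun t => per_deriv _ (h.hper t)
  have hall : ∀ t ∈ Icc ε T, ∀ y, (t - ε) * deriv (u t) y ≤ (t₁ - ε) * deriv (u t₁) x₁ := by
    intro t ht y
    obtain ⟨z, hz, hyz⟩ := Function.Periodic.exists_mem_Ico₀ (f := deriv (u t)) (c := 1)
      (hper t) one_pos y
    rw [hyz]
    exact hmax (show (t, z) ∈ _ from ⟨ht, Ico_subset_Icc_self hz⟩)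
  refine (hall T ⟨hT.le, le_rfl⟩ x).trans ?_
  by_cases hpos : (t₁ - ε) * deriv (u t₁) x₁ ≤ 0
  · exact hpos.trans (inv_nonneg.2 h.hσ.le)
  push Not at hpos
  obtain ⟨⟨ht1, ht2⟩, -⟩ := hmem
  simp only at ht1 ht2
  have ht3 : 0 < t₁ - ε := by
    rcases ht1.eq_or_lt with h' | h'
    · rw [h'] at hpos; simp at hpos
    · linarith
  have hv : 0 < deriv (u t₁) x₁ := (pos_iff_pos_of_mul_pos hpos).1 ht3
  have ht0 : 0 < t₁ := by linarith
  obtain ⟨hx1, hx2⟩ := second_deriv_max (deriv (u t₁)) (hs.dx.slice ht0).continuous x₁ (by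
    intro y
    exact le_of_mul_le_mul_left (hall t₁ ⟨ht1, ht2⟩ y) ht3)
  have hd : HasDerivAt (fun s => (s - ε) * deriv (u s) x₁)
      (1 * deriv (u t₁) x₁ + (t₁ - ε) * deriv (fun s => deriv (u s) x₁) t₁) t₁ := by
    exact ((hasDerivAt_id t₁).sub_const ε).mul
      (hs.dx.hasDerivAt_t ht0 x₁).differentiableAt.hasDerivAt
  have hd0 := left_deriv_max _ _ ε t₁ (by linarith) hd (by
    intro s hs
    exact hall s ⟨hs.1, hs.2.trans ht2⟩ x₁)
  rw [h.pde_x ht0, hx1] at hd0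
  have hc := h.hconv (u t₁ x₁)
  rw [iteratedDeriv_succ, iteratedDeriv_one] at hc
  set v := deriv (u t₁) x₁
  set τ := t₁ - ε
  have k1 : ν * deriv (deriv (deriv (u t₁))) x₁ ≤ 0 := mul_nonpos_of_nonneg_of_nonpos h.hν.le hx2
  have k2 : σ * v ^ 2 ≤ deriv (deriv f) (u t₁ x₁) * v ^ 2 := by gcongr
  have k3 : τ * (ν * deriv (deriv (deriv (u t₁))) x₁ - deriv (deriv f) (u t₁ x₁) * v ^ 2
      - deriv f (u t₁ x₁) * 0) ≤ τ * (- (σ * v ^ 2)) := by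
    apply mul_le_mul_of_nonneg_left _ ht3.le
    linarith
  have k4 : v * (τ * v * σ) ≤ v * 1 := by nlinarith
  have k5 := le_of_mul_le_mul_left k4 hv
  rw [← one_div, le_div_iff₀ h.hσ]
  exact k5

theorem IsBurgersSolution.oleinik {f : ℝ → ℝ} {σ ν : ℝ} {u : ℝ → ℝ → ℝ}
    (h : IsBurgersSolution f σ ν u) {T : ℝ} (hT : 0 < T) (x : ℝ) :
    T * deriv (u T) x ≤ σ⁻¹ := by
  have h1 : Filter.Tendsto (fun ε : ℝ => (T - ε) * deriv (u T) x) (nhdsWithin 0 (Ioi 0))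
      (nhds ((T - 0) * deriv (u T) x)) := by
    apply Filter.Tendsto.mono_left _ nhdsWithin_le_nhds
    exact (by fun_prop : Continuous fun ε : ℝ => (T - ε) * deriv (u T) x).tendsto 0
  rw [sub_zero] at h1
  apply le_of_tendsto h1
  filter_upwards [Ioo_mem_nhdsGT hT] with ε hε
  exact h.oleinik_aux hε.1 hε.2 x

theorem IsBurgersSolution.energy {f : ℝ → ℝ} {σ ν : ℝ} {u : ℝ → ℝ → ℝ}
    (h : IsBurgersSolution f σ ν u) {t : ℝ} (ht : 0 < t) :
    HasDerivAt (fun s => ∫ x in (0:ℝ)..1, u s x ^ 2) (-2 * ν * sobLp 1 2 (u t) ^ 2) t := by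
  have hs := h.smooth
  have hs2 : SmoothOm (fun t x => u t x ^ 2) := ContDiffOn.pow hs 2
  have h1 := hs2.deriv_int ht
  convert h1 using 1
  rw [sobLp_two_sq _ _ (by rw [iteratedDeriv_one]; exact (hs.dx.slice ht).continuous)]
  rw [iteratedDeriv_one]
  have c0 := (hs.slice ht).continuous
  have c1 := (hs.dx.slice ht).continuous
  have c2 := (hs.dx.dx.slice ht).continuous
  have cf : Continuous (deriv f) := (contDiff_infty_iff_deriv.1 h.hf).2.continuous
  have d0 := fun x => ((contDiff_infty_iff_deriv.1 (hs.slice ht)).1 x).hasDerivAt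
  have d1 := fun x => ((contDiff_infty_iff_deriv.1 (hs.dx.slice ht)).1 x).hasDerivAt
  have e0 : u t 1 = u t 0 := by simpa using h.hper t 0
  have e1 : deriv (u t) 1 = deriv (u t) 0 := by simpa using per_deriv _ (h.hper t) 0
  have e : ∀ x, deriv (fun s => u s x ^ 2) t =
      2 * ν * (u t x * deriv (deriv (u t)) x) - 2 * (u t x * deriv f (u t x) * deriv (u t) x) := by
    intro x
    have hh := ((hs.hasDerivAt_t ht x).differentiableAt.hasDerivAt.pow 2).deriv
    have hh2 := h.hpde t ht x
    have hh3 : deriv (fun s => u s x) t = ν * deriv (deriv (u t)) x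
      - deriv f (u t x) * deriv (u t) x := by linarith
    rw [hh3] at hh
    refine hh.trans ?_
    norm_num
    ring
  simp_rw [e]
  rw [intervalIntegral.integral_sub, intervalIntegral.integral_const_mul,
    intervalIntegral.integral_const_mul]
  rotate_left
  · apply Continuous.intervalIntegrable; fun_prop
  · apply Continuous.intervalIntegrable
    have := cf.comp c0
    exact continuous_const.mul ((c0.mul this).mul c1)
  have z : ∫ x in (0:ℝ)..1, u t x * deriv f (u t x) * deriv (u t) x = 0 := by
    have cg : Continuous fun y => y * deriv f y := continuous_id.mul cf
    have hG : ∀ y, HasDerivAt (fun y => ∫ s in (0:ℝ)..y, s * deriv f s) (y * deriv f y) y := by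
      intro y
      exact intervalIntegral.integral_hasDerivAt_right (cg.intervalIntegrable _ _)
        (cg.stronglyMeasurableAtFilter _ _) cg.continuousAt
    rw [intervalIntegral.integral_eq_sub_of_hasDerivAt (fun x _ => (hG (u t x)).comp x (d0 x))]
    · simp [e0]
    · exact ((c0.mul (cf.comp c0)).mul c1).intervalIntegrable _ _
  have ibp := intervalIntegral.integral_mul_deriv_eq_deriv_mul (a := 0) (b := 1)
    (u := u t) (v := deriv (u t)) (u' := deriv (u t)) (v' := deriv (deriv (u t)))
    (fun x _ => d0 x) (fun x _ => d1 x)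
    (c1.intervalIntegrable _ _) (c2.intervalIntegrable _ _)
  rw [e0, e1, sub_self, zero_sub] at ibp
  rw [z, ibp]
  simp_rw [sq]
  ring

theorem IsBurgersSolution.energy_cont {f : ℝ → ℝ} {σ ν : ℝ} {u : ℝ → ℝ → ℝ}
    (h : IsBurgersSolution f σ ν u) :
    ContinuousOn (fun s => ∫ x in (0:ℝ)..1, u s x ^ 2) (Ici 0) := by
  have hc : Continuous (Function.uncurry fun t x => u (max t 0) x ^ 2) := by
    have h1 : Continuous fun p : ℝ × ℝ => (max p.1 0, p.2) := by fun_prop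
    exact (h.hu.continuousOn.comp_continuous h1 fun p => ⟨le_max_right p.1 0, mem_univ _⟩).pow 2
  have h1 := intervalIntegral.continuous_parametric_intervalIntegral_of_continuous' (μ := volume)
    hc 0 1
  apply h1.continuousOn.congr
  intro s hs
  simp only
  rw [max_eq_left (show (0:ℝ) ≤ s from hs)]

theorem IsBurgersSolution.small {f : ℝ → ℝ} {σ ν : ℝ} {u : ℝ → ℝ → ℝ}
    (h : IsBurgersSolution f σ ν u) {t : ℝ} (ht : 0 < t) {b : ℝ}  (hb : 0 ≤ b)
    (hub : ∀ x, deriv (u t) x ≤ b) : ∫ x in (0:ℝ)..1, u t x ^ 2 ≤ b ^ 2 := by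
  have hs := h.smooth.slice ht
  have c0 := hs.continuous
  have hdiff : Differentiable ℝ (u t) := (contDiff_infty_iff_deriv.1 hs).1
  have hP : ∀ y, HasDerivAt (fun y => ∫ s in (0:ℝ)..y, u t s) (u t y) y := fun y =>
    intervalIntegral.integral_hasDerivAt_right (c0.intervalIntegrable _ _)
        (c0.stronglyMeasurableAtFilter _ _) c0.continuousAt
  obtain ⟨z, hz, hz0⟩ := exists_deriv_eq_zero (f := fun y => ∫ s in (0:ℝ)..y, u t s) zero_lt_one
    (fun y _ => (hP y).continuousAt.continuousWithinAt) (by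
      rw [intervalIntegral.integral_same, intervalIntegral.integral_of_le zero_le_one,
        h.hmean t ht.le])
  rw [(hP z).deriv] at hz0
  have key := image_sub_le_mul_sub_of_deriv_le hdiff hub
  have hbd : ∀ x ∈ Icc (0:ℝ) 1, u t x ^ 2 ≤ b ^ 2 := by
    intro x hx
    apply sq_le_sq'
    · rcases le_total x z with hxz | hxz
      · have := key hxz
        nlinarith [hz.1, hz.2, hx.1, hx.2]
      · have := key (show x ≤ z + 1 by linarith [hz.1, hx.2])
        rw [h.hper] at this
        nlinarith [hz.1, hz.2, hx.1, hx.2]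
    · rcases le_total x z with hxz | hxz
      · have := key (show z ≤ x + 1 by linarith [hz.2, hx.1])
        rw [h.hper] at this
        nlinarith [hz.1, hz.2, hx.1, hx.2]
      · have := key hxz
        nlinarith [hz.1, hz.2, hx.1, hx.2]
  calc ∫ x in (0:ℝ)..1, u t x ^ 2 ≤ ∫ x in (0:ℝ)..1, b ^ 2 :=
        intervalIntegral.integral_mono_on zero_le_one ((c0.pow 2).intervalIntegrable _ _)
          (by simp) hbd
    _ = b ^ 2 := by simp

theorem IsBurgersSolution.cont_zero {f : ℝ → ℝ} {σ ν : ℝ} {u : ℝ → ℝ → ℝ}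
    (h : IsBurgersSolution f σ ν u) : Continuous (u 0) := by
  have h1 : Continuous fun x : ℝ => ((0:ℝ), x) := by fun_prop
  exact h.hu.continuousOn.comp_continuous h1 fun p => ⟨le_refl (0:ℝ), mem_univ _⟩

theorem IsBurgersSolution.init_pos {f : ℝ → ℝ} {σ ν : ℝ} {u : ℝ → ℝ → ℝ}
    (h : IsBurgersSolution f σ ν u) : 0 < sobLp 0 1 (u 0) := by
  rw [sobLp_zero_one _ h.cont_zero]
  obtain ⟨x, hx⟩ := h.hinit
  obtain ⟨z, hz, hxz⟩ := Function.Periodic.exists_mem_Ico₀ (f := u 0) (c := 1)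
      (h.hper 0) one_pos x
  apply intervalIntegral.integral_pos zero_lt_one h.cont_zero.abs.continuousOn
    (fun _ _ => abs_nonneg _)
  exact ⟨z, Ico_subset_Icc_self hz, abs_pos.2 (hxz ▸ hx)⟩

theorem IsBurgersSolution.D_pos {f : ℝ → ℝ} {σ ν : ℝ} {u : ℝ → ℝ → ℝ}
    (h : IsBurgersSolution f σ ν u) : 0 < burgersD u :=
  lt_max_of_lt_left (inv_pos.2 h.init_pos)

theorem IsBurgersSolution.init_energy {f : ℝ → ℝ} {σ ν : ℝ} {u : ℝ → ℝ → ℝ}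
    (h : IsBurgersSolution f σ ν u) :
    (burgersD u ^ 2)⁻¹ ≤ ∫ x in (0:ℝ)..1, u 0 x ^ 2 := by
  have h1 : (burgersD u)⁻¹ ≤ sobLp 0 1 (u 0) := by
    have : (sobLp 0 1 (u 0))⁻¹ ≤ burgersD u := le_max_left _ _
    exact inv_le_of_inv_le₀ h.init_pos this
  have h2 := cs_int (fun x => |u 0 x|) (fun _ => 1) h.cont_zero.abs continuous_const
  simp only [mul_one, sq_abs, one_pow, intervalIntegral.integral_const, sub_zero, smul_eq_mul] at h2
  rw [← sobLp_zero_one _ h.cont_zero] at h2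
  refine le_trans ?_ h2
  rw [← inv_pow]
  have := inv_pos.2 h.D_pos
  gcongr

theorem IsBurgersSolution.cont_sob {f : ℝ → ℝ} {σ ν : ℝ} {u : ℝ → ℝ → ℝ}
    (h : IsBurgersSolution f σ ν u) (j : ℕ) :
    ContinuousOn (fun t => sobLp j 2 (u t) ^ 2) (Ioi 0) := by
  have hs : ContinuousOn (Function.uncurry fun t x => iteratedDeriv j (u t) x ^ 2) Om :=
    (h.smooth.iter j).continuousOn.pow 2
  apply (SmoothOm.cont_int hs).congr
  intro t ht
  exact sobLp_two_sq _ _ ((h.smooth.iter j).slice ht).continuous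

theorem IsBurgersSolution.dissipation {f : ℝ → ℝ} {σ ν D Ct : ℝ} {u : ℝ → ℝ → ℝ}
    (h : IsBurgersSolution f σ ν u) (hD : burgersD u = D) (hCt : 0 < Ct)
    (hb : ∀ t, 0 ≤ t → sobLp 1 2 (u t) ^ 2 ≤ Ct * ν⁻¹) :
    (8 * D ^ 2)⁻¹ * ν⁻¹ ≤
      ∫ t in burgersT₁ D Ct..burgersT₂ σ D Ct, sobLp 1 2 (u t) ^ 2 := by
  have hD0 : 0 < D := hD ▸ h.D_pos
  have hσ := h.hσ
  have hν := h.hν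
  have hT1 : 0 < burgersT₁ D Ct := by unfold burgersT₁; positivity
  have hT12 : burgersT₁ D Ct < burgersT₂ σ D Ct :=
    lt_of_lt_of_le (by linarith) (le_max_left _ _)
  have hT2 : 2 * D * σ⁻¹ ≤ burgersT₂ σ D Ct := le_max_right _ _
  have hT1e : 2 * Ct * burgersT₁ D Ct = (D ^ 2)⁻¹ / 2 := by
    unfold burgersT₁; field_simp; norm_num
  set T₁ := burgersT₁ D Ct
  set T₂ := burgersT₂ σ D Ct
  set E : ℝ → ℝ := fun s => ∫ x in (0:ℝ)..1, u s x ^ 2 with hE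
  have hEd : ∀ t, 0 < t → HasDerivAt E (-2 * ν * sobLp 1 2 (u t) ^ 2) t := fun t ht => h.energy ht
  have hmono : MonotoneOn (fun t => E t + 2 * Ct * t) (Icc 0 T₁) := by
    have hd : ∀ t, 0 < t → HasDerivAt (fun t => E t + 2 * Ct * t)
        (-2 * ν * sobLp 1 2 (u t) ^ 2 + 2 * Ct * 1) t := fun t ht =>
      (hEd t ht).add ((hasDerivAt_id t).const_mul (2 * Ct))
    apply monotoneOn_of_deriv_nonneg (convex_Icc _ _)
    · exact (h.energy_cont.mono Icc_subset_Ici_self).add (by fun_prop)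
    · intro t ht
      rw [interior_Icc] at ht
      exact (hd t ht.1).differentiableAt.differentiableWithinAt
    · intro t ht
      rw [interior_Icc] at ht
      rw [(hd t ht.1).deriv]
      have := mul_le_mul_of_nonneg_left (hb t ht.1.le) hν.le
      rw [show ν * (Ct * ν⁻¹) = Ct by field_simp] at this
      linarith
  have hE1 : E 0 ≤ E T₁ + 2 * Ct * T₁ := by
    have := hmono ⟨le_rfl, hT1.le⟩ ⟨hT1.le, le_rfl⟩ hT1.le
    simpa using this
  have hE0 : (D ^ 2)⁻¹ ≤ E 0 := hD ▸ h.init_energy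
  have hE2 : E T₂ ≤ (D ^ 2)⁻¹ / 4 := by
    have := h.small (hT1.trans hT12) (b := (2 * D)⁻¹) (by positivity) (by
      intro x
      have h1 := h.oleinik (hT1.trans hT12) x
      by_contra! hlt
      have h2 : 2 * D * σ⁻¹ * (2 * D)⁻¹ < T₂ * deriv (u T₂) x :=
        mul_lt_mul' hT2 hlt (by positivity) (hT1.trans hT12)
      rw [show 2 * D * σ⁻¹ * (2 * D)⁻¹ = σ⁻¹ by field_simp] at h2
      linarith)
    refine this.trans (le_of_eq ?_)
    field_simp; norm_num
  have hpos : ∀ t ∈ uIcc T₁ T₂, 0 < t := by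
    intro t ht
    rw [uIcc_of_le hT12.le] at ht
    exact hT1.trans_le ht.1
  have hcont : ContinuousOn (fun t => sobLp 1 2 (u t) ^ 2) (uIcc T₁ T₂) :=
    (h.cont_sob 1).mono hpos
  have hftc := intervalIntegral.integral_eq_sub_of_hasDerivAt (fun t ht => hEd t (hpos t ht))
    ((continuousOn_const.mul hcont).intervalIntegrable)
  rw [intervalIntegral.integral_const_mul] at hftc
  have hfin : (D ^ 2)⁻¹ / 4 ≤ 2 * ν * ∫ t in T₁..T₂, sobLp 1 2 (u t) ^ 2 := by linarith
  rw [mul_inv, ← div_eq_mul_inv _ ν, div_le_iff₀ hν]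
  linarith

theorem tangent_pow (s a : ℝ) (hs : 0 < s) (ha : 0 ≤ a) (n : ℕ) :
    s ^ n + n * s ^ n * (a / s - 1) ≤ a ^ n := by
  have h1 := one_add_mul_sub_le_pow (a := a / s) (by
    have : 0 ≤ a / s := by positivity
    linarith) n
  have h2 := mul_le_mul_of_nonneg_left h1 (pow_pos hs n).le
  rw [div_pow, mul_div_cancel₀ _ (pow_pos hs n).ne'] at h2
  linarith

/-- For every integer `m ≥ 1` there is `c > 0` depending only on
`f`, `D`, `m` such that for every `ν ∈ (0,1]`, the time average over `[T₁,T₂]`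
satisfies `{‖u(t)‖_m²} ≥ c ν^{-(2m-1)}`. -/
theorem statement9 (f : ℝ → ℝ) (σ D Ct : ℝ) (hCt : 0 < Ct)
    (hCtb : ∀ ν, 0 < ν → ν ≤ 1 →
      ∀ u : ℝ → ℝ → ℝ, IsBurgersSolution f σ ν u → burgersD u = D →
        ∀ t, 0 ≤ t → sobLp 1 2 (u t) ^ 2 ≤ Ct * ν⁻¹)
    (m : ℕ) (hm : 1 ≤ m) :
    ∃ c > 0, ∀ ν, 0 < ν → ν ≤ 1 →
      ∀ u : ℝ → ℝ → ℝ, IsBurgersSolution f σ ν u → burgersD u = D →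
        c * ν ^ (-(2 * (m : ℝ) - 1))
          ≤ timeAvg (burgersT₁ D Ct) (burgersT₂ σ D Ct)
              (fun t => sobLp m 2 (u t) ^ 2) := by
  by_cases hex : 0 < D ∧ 0 < σ
  swap
  · refine ⟨1, one_pos, fun ν _ _ u hu hD => absurd ⟨?_, hu.hσ⟩ hex⟩
    exact hD ▸ hu.D_pos
  obtain ⟨hD0, hσ⟩ := hex
  have hT1 : 0 < burgersT₁ D Ct := by unfold burgersT₁; positivity
  have hT12 : burgersT₁ D Ct < burgersT₂ σ D Ct :=
    lt_of_lt_of_le (by linarith) (le_max_left _ _)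
  obtain ⟨k, rfl⟩ : ∃ k, m = k + 1 := ⟨m - 1, by omega⟩
  set T₁ := burgersT₁ D Ct with hT1def
  set T₂ := burgersT₂ σ D Ct with hT2def
  have hL : 0 < T₂ - T₁ := by linarith
  set B := (σ * T₁)⁻¹ with hB
  have hB0 : 0 < B := by positivity
  set K := (4 * (2 * B) ^ 4) ^ k with hK
  have hK0 : 0 < K := by positivity
  set s₀ := (T₂ - T₁)⁻¹ * (8 * D ^ 2)⁻¹ with hs₀
  have hs₀0 : 0 < s₀ := by positivity
  refine ⟨K⁻¹ * s₀ ^ (2 * k + 1), by positivity, ?_⟩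
  intro ν hν hν1 u hu hD
  have hdis := hu.dissipation hD hCt (hCtb ν hν hν1 u hu hD)
  rw [← hT1def, ← hT2def] at hdis
  set s := s₀ * ν⁻¹ with hs
  have hs0 : 0 < s := by positivity
  have hpow : ν ^ (-(2 * ((k + 1 : ℕ) : ℝ) - 1)) = (ν⁻¹) ^ (2 * k + 1) := by
    rw [Real.rpow_neg hν.le, inv_pow, ← Real.rpow_natCast]
    congr 2
    push_cast; ring
  rw [hpow, mul_assoc, ← mul_pow, ← hs]
  have hpos : ∀ t ∈ uIcc T₁ T₂, 0 < t := by
    intro t ht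
    rw [uIcc_of_le hT12.le] at ht
    exact hT1.trans_le ht.1
  have hc1 : ContinuousOn (fun t => sobLp 1 2 (u t) ^ 2) (uIcc T₁ T₂) :=
    (hu.cont_sob 1).mono hpos
  have hcm : ContinuousOn (fun t => sobLp (k + 1) 2 (u t) ^ 2) (uIcc T₁ T₂) :=
    (hu.cont_sob (k + 1)).mono hpos
  set n := 2 * k + 1 with hn
  have hpt : ∀ t ∈ Icc T₁ T₂, s ^ n + n * s ^ n * (sobLp 1 2 (u t) ^ 2 / s - 1) ≤
      K * sobLp (k + 1) 2 (u t) ^ 2 := by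
    intro t ht
    have ht0 : 0 < t := hT1.trans_le ht.1
    refine (tangent_pow s _ hs0 (sq_nonneg _) n).trans ?_
    apply gn_full (u t) (hu.smooth.slice ht0) (hu.hper t) B hB0.le
    intro x
    have h1 := hu.oleinik ht0 x
    by_contra! hlt
    have h2 : T₁ * B < t * deriv (u t) x := mul_lt_mul' ht.1 hlt hB0.le ht0
    rw [show T₁ * B = σ⁻¹ by rw [hB]; field_simp] at h2
    linarith
  have hci : ContinuousOn (fun t => s ^ n + n * s ^ n * (sobLp 1 2 (u t) ^ 2 / s - 1))
      (uIcc T₁ T₂) :=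
    continuousOn_const.add (continuousOn_const.mul ((hc1.div_const s).sub continuousOn_const))
  have hcK : ContinuousOn (fun t => K * sobLp (k + 1) 2 (u t) ^ 2) (uIcc T₁ T₂) :=
    continuousOn_const.mul hcm
  have hcd : ContinuousOn (fun t => sobLp 1 2 (u t) ^ 2 / s) (uIcc T₁ T₂) := hc1.div_const s
  have hce : ContinuousOn (fun t => n * s ^ n * (sobLp 1 2 (u t) ^ 2 / s - 1)) (uIcc T₁ T₂) :=
    continuousOn_const.mul (hcd.sub continuousOn_const)
  have hint : ∫ t in T₁..T₂, (s ^ n + n * s ^ n * (sobLp 1 2 (u t) ^ 2 / s - 1)) ≤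
      ∫ t in T₁..T₂, K * sobLp (k + 1) 2 (u t) ^ 2 :=
    intervalIntegral.integral_mono_on hT12.le hci.intervalIntegrable hcK.intervalIntegrable hpt
  rw [intervalIntegral.integral_const_mul, intervalIntegral.integral_add
      (by simp) hce.intervalIntegrable,
    intervalIntegral.integral_const_mul, intervalIntegral.integral_sub
      hcd.intervalIntegrable (by simp), intervalIntegral.integral_div] at hint
  simp only [intervalIntegral.integral_const, smul_eq_mul, mul_one] at hint
  set I := ∫ t in T₁..T₂, sobLp 1 2 (u t) ^ 2 with hI
  set J := ∫ t in T₁..T₂, sobLp (k + 1) 2 (u t) ^ 2 with hJ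
  have hIs : T₂ - T₁ ≤ I / s := by
    rw [le_div_iff₀ hs0]
    refine le_trans (le_of_eq ?_) hdis
    rw [hs, hs₀]; field_simp
  have h5 : (T₂ - T₁) * s ^ n ≤ K * J := by
    have : 0 ≤ (n:ℝ) * s ^ n * (I / s - (T₂ - T₁)) := by
      apply mul_nonneg (by positivity); linarith
    linarith
  change K⁻¹ * s ^ n ≤ (T₂ - T₁)⁻¹ * J
  rw [inv_mul_eq_div, inv_mul_eq_div, div_le_div_iff₀ hK0 hL]
  linarith
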